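/- Let Z and X be measurable spaces with σ-finite measures. Let k : Z × Z → [0, ∞) be a measurable symmetric probability density with marginal π_Z(z) = ∫ k(z, z′) dz′, let p : Z × X → [0, ∞) be a measurable decoder density with ∫ p(z, x) dx = 1 for all z, let p_X(x) = ∫ p(z, x) π_Z(z) dz be the model marginal, and let q : X × Z → [0, ∞) be a measurable encoder density. Assume the consistency condition q(x, z) · p_X(x) = p(z, x) · π_Z(z) for almost every (x, z). Define Q̄(x, x′) = ∭ p_X(x) q(x, z) (k(z, z′)/π_Z(z)) p(z′, x′) dz dz′ (on the set where π_Z(z) > 0). Then Q̄(x, x′) = P̄(x, x′) for almost every (x, x′), where P̄(x, x′) = ∬ p(z, x) p(z′, x′) k(z, z′) dz dz′; consequently ∫ Q̄(x, x′) dx = p_X(x′), i.e. the encode–couple–decode transition kernel leaves the model marginal p_X invariant. (This is Proposition 3 of the paper.) -/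

import Mathlib

open MeasureTheory
open scoped ENNReal

/-!
Where the latent marginal `π_Z` is positive and finite, consistency turns `p_X(x) q(x, z)` into
`p(z, x) π_Z(z)`, and the factor `π_Z(z)` cancels against the transition density
`k(z, z') / π_Z(z)`. Where `π_Z(z) = 0`, the section `k(z, ·)` vanishes almost everywhere, so `P̄`
also loses nothing by dropping these `z`. Integrating `P̄` over `x` by Tonelli leaves the mixture
of the decoder over the second marginal of `k`, which by symmetry is again `π_Z`.
-/

lemma ennreal_mul_mul_div_mul_cancel {m : ℝ≥0∞} (h0 : m ≠ 0) (htop : m ≠ ∞) (a b t : ℝ≥0∞) :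
    a * m * (t / m) * b = a * b * t := by
  calc a * m * (t / m) * b = a * (m * (t / m)) * b := by rw [mul_assoc a]
    _ = a * t * b := by rw [ENNReal.mul_div_cancel h0 htop]
    _ = a * b * t := mul_right_comm a t b

section Coupling

variable {Z W X Y : Type*} [MeasurableSpace W] {ν : Measure W} {k : Z → W → ℝ≥0∞}

/-- The density of the first marginal of a coupling with density `k` with respect to `μ.prod ν`;
for the latent coupling this is `π_Z`. -/
noncomputable def couplingMarginal (ν : Measure W) (k : Z → W → ℝ≥0∞) (z : Z) : ℝ≥0∞ :=
  ∫⁻ w, k z w ∂ν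

lemma lintegral_mul_eq_zero_of_couplingMarginal_eq_zero {z : Z} (hk : AEMeasurable (k z) ν)
    (hz : couplingMarginal ν k z = 0) (f : W → ℝ≥0∞) : ∫⁻ w, f w * k z w ∂ν = 0 := by
  have hkz : k z =ᵐ[ν] 0 := (lintegral_eq_zero_iff' hk).1 hz
  exact lintegral_eq_zero_of_ae_eq_zero (hkz.mono fun _ hw ↦ by simp [hw])

variable [MeasurableSpace Z] {μ : Measure Z}

/-- The density of the mixture of the decoder densities `p z` with mixing density `f`; for
`f = π_Z` this is the model marginal `p_X`. -/
noncomputable def decoderMixture (μ : Measure Z) (p : Z → X → ℝ≥0∞) (f : Z → ℝ≥0∞) (x : X) :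
    ℝ≥0∞ :=
  ∫⁻ z, p z x * f z ∂μ

/-- The joint density `P̄` of the decoded pair when the latent pair has density `k`. The two latent
variables may live in different spaces and have different decoders `p` and `r`. -/
noncomputable def modelJoint (μ : Measure Z) (ν : Measure W) (k : Z → W → ℝ≥0∞)
    (p : Z → X → ℝ≥0∞) (r : W → Y → ℝ≥0∞) (x : X) (y : Y) : ℝ≥0∞ :=
  ∫⁻ z, ∫⁻ w, p z x * r w y * k z w ∂ν ∂μ

/-- The joint density `Q̄` obtained by drawing `x` from the model marginal, encoding it with `q`,
moving the latent variable by the conditional density of `k` and decoding with `r`. The integral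
is restricted to the latent points at which that conditional density is defined. -/
noncomputable def encodeCoupleDecodeJoint (μ : Measure Z) (ν : Measure W) (k : Z → W → ℝ≥0∞)
    (p : Z → X → ℝ≥0∞) (r : W → Y → ℝ≥0∞) (q : X → Z → ℝ≥0∞) (x : X) (y : Y) : ℝ≥0∞ :=
  ∫⁻ z in {z | 0 < couplingMarginal ν k z}, ∫⁻ w,
    decoderMixture μ p (couplingMarginal ν k) x * q x z * (k z w / couplingMarginal ν k z) * r w y
      ∂ν ∂μ

lemma measurable_couplingMarginal [SFinite ν] (hk : Measurable (Function.uncurry k)) :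
    Measurable (couplingMarginal ν k) :=
  hk.lintegral_prod_right'

lemma ae_couplingMarginal_ne_top [SFinite ν] (hk : Measurable (Function.uncurry k))
    (hmass : ∫⁻ z, ∫⁻ w, k z w ∂ν ∂μ ≠ ∞) : ∀ᵐ z ∂μ, couplingMarginal ν k z ≠ ∞ :=
  (ae_lt_top (measurable_couplingMarginal hk) hmass).mono fun _ ↦ LT.lt.ne

theorem encodeCoupleDecodeJoint_eq_modelJoint [SFinite ν] (hk : Measurable (Function.uncurry k))
    (hfin : ∀ᵐ z ∂μ, couplingMarginal ν k z ≠ ∞)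
    {p : Z → X → ℝ≥0∞} {q : X → Z → ℝ≥0∞} {x : X}
    (hconsistent : ∀ᵐ z ∂μ, q x z * decoderMixture μ p (couplingMarginal ν k) x =
      p z x * couplingMarginal ν k z)
    (r : W → Y → ℝ≥0∞) (y : Y) :
    encodeCoupleDecodeJoint μ ν k p r q x y = modelJoint μ ν k p r x y := by
  have hpos : MeasurableSet {z | 0 < couplingMarginal ν k z} :=
    measurableSet_lt measurable_const (measurable_couplingMarginal hk)
  rw [encodeCoupleDecodeJoint, modelJoint, ← lintegral_indicator hpos]
  refine lintegral_congr_ae ?_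
  filter_upwards [hconsistent, hfin] with z hz hztop
  rcases eq_or_ne (couplingMarginal ν k z) 0 with h0 | h0
  · rw [Set.indicator_of_notMem (by simp [h0]), lintegral_mul_eq_zero_of_couplingMarginal_eq_zero
      hk.of_uncurry_left.aemeasurable h0]
  · have hmem : z ∈ {z | 0 < couplingMarginal ν k z} := pos_iff_ne_zero.2 h0
    rw [Set.indicator_of_mem hmem]
    refine lintegral_congr fun w ↦ ?_
    rw [mul_comm (decoderMixture _ _ _ x), hz, ennreal_mul_mul_div_mul_cancel h0 hztop]

theorem lintegral_modelJoint [SFinite μ] [SFinite ν] [MeasurableSpace X] {μX : Measure X}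
    [SFinite μX] (hk : Measurable (Function.uncurry k))
    {p : Z → X → ℝ≥0∞} (hp : Measurable (Function.uncurry p))
    (hpprob : ∀ᵐ z ∂μ, ∫⁻ x, p z x ∂μX = 1)
    {r : W → Y → ℝ≥0∞} {y : Y} (hr : Measurable fun w ↦ r w y) :
    ∫⁻ x, modelJoint μ ν k p r x y ∂μX =
      decoderMixture ν r (couplingMarginal μ (Function.swap k)) y := by
  have hrk : Measurable (Function.uncurry fun z w ↦ r w y * k z w) :=
    (hr.comp measurable_snd).mul hk
  have hinner : Measurable fun z ↦ ∫⁻ w, r w y * k z w ∂ν := hrk.lintegral_prod_right'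
  calc ∫⁻ x, modelJoint μ ν k p r x y ∂μX
      = ∫⁻ x, ∫⁻ z, p z x * ∫⁻ w, r w y * k z w ∂ν ∂μ ∂μX := by
        simp only [modelJoint, mul_assoc, lintegral_const_mul _ hrk.of_uncurry_left]
    _ = ∫⁻ z, ∫⁻ x, p z x * ∫⁻ w, r w y * k z w ∂ν ∂μX ∂μ :=
        lintegral_lintegral_swap
          ((hp.comp measurable_swap).mul (hinner.comp measurable_snd)).aemeasurable
    _ = ∫⁻ z, ∫⁻ w, r w y * k z w ∂ν ∂μ := by
        refine lintegral_congr_ae (hpprob.mono fun z hz ↦ ?_)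
        simp only [lintegral_mul_const _ hp.of_uncurry_left, hz, one_mul]
    _ = ∫⁻ w, ∫⁻ z, r w y * k z w ∂μ ∂ν := lintegral_lintegral_swap hrk.aemeasurable
    _ = decoderMixture ν r (couplingMarginal μ (Function.swap k)) y :=
        lintegral_congr fun w ↦ lintegral_const_mul _ hk.of_uncurry_right

end Coupling

theorem consistency_implies_model_marginal_invariant_general
    {Z X : Type*} [MeasurableSpace Z] [MeasurableSpace X]
    {μZ : Measure Z} {μX : Measure X} [SFinite μZ] [SFinite μX]
    {k : Z → Z → ℝ≥0∞} (hk : Measurable (Function.uncurry k))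
    (hmarginals : couplingMarginal μZ (Function.swap k) =ᵐ[μZ] couplingMarginal μZ k)
    (hfin : ∀ᵐ z ∂μZ, couplingMarginal μZ k z ≠ ∞)
    {p : Z → X → ℝ≥0∞} (hp : Measurable (Function.uncurry p))
    (hpprob : ∀ᵐ z ∂μZ, ∫⁻ x, p z x ∂μX = 1) {q : X → Z → ℝ≥0∞}
    (hconsistent : ∀ᵐ xz : X × Z ∂(μX.prod μZ),
      q xz.1 xz.2 * decoderMixture μZ p (couplingMarginal μZ k) xz.1 =
        p xz.2 xz.1 * couplingMarginal μZ k xz.2) :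
    (∀ᵐ x ∂μX, ∀ x',
      encodeCoupleDecodeJoint μZ μZ k p p q x x' = modelJoint μZ μZ k p p x x') ∧
    (∀ x', ∫⁻ x, encodeCoupleDecodeJoint μZ μZ k p p q x x' ∂μX =
      decoderMixture μZ p (couplingMarginal μZ k) x') := by
  have hjoint : ∀ᵐ x ∂μX, ∀ x',
      encodeCoupleDecodeJoint μZ μZ k p p q x x' = modelJoint μZ μZ k p p x x' :=
    (Measure.ae_ae_of_ae_prod hconsistent).mono fun x hx x' ↦
      encodeCoupleDecodeJoint_eq_modelJoint hk hfin hx p x'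
  refine ⟨hjoint, fun x' ↦ ?_⟩
  calc ∫⁻ x, encodeCoupleDecodeJoint μZ μZ k p p q x x' ∂μX
      = ∫⁻ x, modelJoint μZ μZ k p p x x' ∂μX :=
        lintegral_congr_ae (hjoint.mono fun _ hx ↦ hx x')
    _ = decoderMixture μZ p (couplingMarginal μZ (Function.swap k)) x' :=
        lintegral_modelJoint hk hp hpprob hp.of_uncurry_right
    _ = decoderMixture μZ p (couplingMarginal μZ k) x' :=
        lintegral_congr_ae (hmarginals.mono fun z hz ↦ congrArg (p z x' * ·) hz)

/-- Proposition 3: if the encoder `q` equals the exact posterior of the decoder model, i.e.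
`q(x, z) ⋅ p_X(x) = p(z, x) ⋅ π_Z(z)` almost everywhere (the consistency condition), then the
encode–couple–decode joint density `Q̄` agrees almost everywhere with the model joint density
`P̄(x, x') = ∬ p(z, x) p(z', x') k(z, z') dz dz'`; consequently the induced transition kernel
leaves the model marginal `p_X` invariant: `∫ Q̄(x, x') dx = p_X(x')` for a.e. `x'`. -/
theorem consistency_implies_model_marginal_invariant
    {Z X : Type*} [MeasurableSpace Z] [MeasurableSpace X]
    (μZ : Measure Z) (μX : Measure X) [SigmaFinite μZ] [SigmaFinite μX]
    (k : Z → Z → ℝ≥0∞) (hk : Measurable (Function.uncurry k))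
    (hksymm : ∀ z z', k z z' = k z' z)
    (hkprob : ∫⁻ z, ∫⁻ z', k z z' ∂μZ ∂μZ = 1)
    (p : Z → X → ℝ≥0∞) (hp : Measurable (Function.uncurry p))
    (hpprob : ∀ z, ∫⁻ x, p z x ∂μX = 1)
    (q : X → Z → ℝ≥0∞) (hq : Measurable (Function.uncurry q))
    (πZ : Z → ℝ≥0∞) (hπZ : ∀ z, πZ z = ∫⁻ z', k z z' ∂μZ)
    (pX : X → ℝ≥0∞) (hpX : ∀ x, pX x = ∫⁻ z, p z x * πZ z ∂μZ)
    (hconsistent : ∀ᵐ xz : X × Z ∂(μX.prod μZ),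
      q xz.1 xz.2 * pX xz.1 = p xz.2 xz.1 * πZ xz.2)
    (Qbar : X → X → ℝ≥0∞)
    (hQbar : ∀ x x', Qbar x x' =
      ∫⁻ z in {z | 0 < πZ z}, ∫⁻ z', pX x * q x z * (k z z' / πZ z) * p z' x' ∂μZ ∂μZ)
    (Pbar : X → X → ℝ≥0∞)
    (hPbar : ∀ x x', Pbar x x' = ∫⁻ z, ∫⁻ z', p z x * p z' x' * k z z' ∂μZ ∂μZ) :
    (∀ᵐ xx : X × X ∂(μX.prod μX), Qbar xx.1 xx.2 = Pbar xx.1 xx.2) ∧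
    (∀ᵐ x' ∂μX, ∫⁻ x, Qbar x x' ∂μX = pX x') := by
  obtain rfl : πZ = couplingMarginal μZ k := funext hπZ
  obtain rfl : pX = decoderMixture μZ p (couplingMarginal μZ k) := funext hpX
  obtain rfl : Qbar = encodeCoupleDecodeJoint μZ μZ k p p q := funext₂ hQbar
  obtain rfl : Pbar = modelJoint μZ μZ k p p := funext₂ hPbar
  have hswap : Function.swap k = k := funext₂ fun z z' ↦ hksymm z' z
  obtain ⟨hjoint, hinvariant⟩ := consistency_implies_model_marginal_invariant_general hk
    (by rw [hswap]) (ae_couplingMarginal_ne_top hk (hkprob.trans_ne ENNReal.one_ne_top)) hp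
    (ae_of_all _ hpprob) hconsistent
  exact ⟨(Measure.quasiMeasurePreserving_fst.ae hjoint).mono fun xx h ↦ h xx.2,
    ae_of_all _ hinvariant⟩
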